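/- Let (E,φ) be a finitely aligned product system of graphs over ℕ^k and {t_λ : λ ∈ E¹} a Toeplitz E-family in a C*-algebra B. Then {t_λ} satisfies relation (5) (t_μ* t_ν = ∑_{γ = μα = νβ ∈ MCE(μ,ν)} t_α t_β* for all μ,ν ∈ E¹), and hence is a Toeplitz–Cuntz–Krieger E-family, if and only if t_μ* t_ν = ∑_{γ = μα = νβ ∈ MCE(μ,ν)} t_α t_β* holds for every μ ∈ E¹_{e_i} and ν ∈ E¹_{e_j} with s(μ) = s(ν) and i ≠ j. -/

import Mathlib

open scoped Classical

noncomputable section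

namespace PSG

variable {G : Type*} [Group G] {Λ : Type*}

/-- `g ≤ h` in the left-invariant partial order induced by the submonoid `P`. -/
def qle (P : Submonoid G) (g h : G) : Prop := g⁻¹ * h ∈ P

/-- `r` is a common upper bound of `p` and `q` in `P`. -/
def IsUB (P : Submonoid G) (p q r : G) : Prop := r ∈ P ∧ qle P p r ∧ qle P q r

/-- `r` is the least common upper bound of `p` and `q` in `P`. -/
def IsLUB2 (P : Submonoid G) (p q r : G) : Prop :=
  IsUB P p q r ∧ ∀ r', IsUB P p q r' → qle P r r'

/-- `r` is the least upper bound in `P` of the set of degrees `D`. -/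
def IsLUBFam (P : Submonoid G) (D : Set G) (r : G) : Prop :=
  r ∈ P ∧ (∀ p ∈ D, qle P p r) ∧ ∀ r' ∈ P, (∀ p ∈ D, qle P p r') → qle P r r'

/-- `(G, P)` is quasi-lattice ordered: `P ∩ P⁻¹ = {1}` and every pair of elements of `P`
with a common upper bound in `P` has a least upper bound in `P`. -/
def QuasiLatticeOrdered (P : Submonoid G) : Prop :=
  (∀ g ∈ P, g⁻¹ ∈ P → g = 1) ∧
    ∀ p ∈ P, ∀ q ∈ P, (∃ r, IsUB P p q r) → ∃ r, IsLUB2 P p q r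

/-- A product system of graphs over `P`, encoded on a single edge set `Λ` (which contains the
vertices as the elements of degree `1`), with degree map `d`, source and range maps `src`, `rng`
(valued in vertices), and partial multiplication `mul` (meaningful when `rng a = src b`). -/
structure IsProductSystem (P : Submonoid G) (d : Λ → G) (src rng : Λ → Λ)
    (mul : Λ → Λ → Λ) : Prop where
  countable : Countable Λ
  d_mem : ∀ a, d a ∈ P
  d_src : ∀ a, d (src a) = 1
  d_rng : ∀ a, d (rng a) = 1
  src_vertex : ∀ v, d v = 1 → src v = v
  rng_vertex : ∀ v, d v = 1 → rng v = v
  d_mul : ∀ a b, rng a = src b → d (mul a b) = d a * d b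
  src_mul : ∀ a b, rng a = src b → src (mul a b) = src a
  rng_mul : ∀ a b, rng a = src b → rng (mul a b) = rng b
  mul_assoc' : ∀ a b c, rng a = src b → rng b = src c →
    mul (mul a b) c = mul a (mul b c)
  src_mul_self : ∀ a, mul (src a) a = a
  mul_rng_self : ∀ a, mul a (rng a) = a
  factor : ∀ p q : G, p ∈ P → q ∈ P → ∀ c, d c = p * q →
    ∃! ab : Λ × Λ, d ab.1 = p ∧ d ab.2 = q ∧ rng ab.1 = src ab.2 ∧ mul ab.1 ab.2 = c

/-- `a` is an initial segment of `c`: `c = a • b` for some (necessarily unique) `b`. -/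
def IsInit (src rng : Λ → Λ) (mul : Λ → Λ → Λ) (a c : Λ) : Prop :=
  ∃ b, rng a = src b ∧ mul a b = c

/-- The set of minimal common extensions of `μ` and `ν`. -/
def MCE (P : Submonoid G) (d : Λ → G) (src rng : Λ → Λ) (mul : Λ → Λ → Λ)
    (μ ν : Λ) : Set Λ :=
  {γ | IsInit src rng mul μ γ ∧ IsInit src rng mul ν γ ∧ IsLUB2 P (d μ) (d ν) (d γ)}

/-- The product system is finitely aligned. -/
def FinitelyAligned (P : Submonoid G) (d : Λ → G) (src rng : Λ → Λ)
    (mul : Λ → Λ → Λ) : Prop :=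
  ∀ μ ν : Λ, (MCE P d src rng mul μ ν).Finite

/-- The set of minimal common extensions of a set `S` of edges. -/
def MCEset (P : Submonoid G) (d : Λ → G) (src rng : Λ → Λ) (mul : Λ → Λ → Λ)
    (S : Set Λ) : Set Λ :=
  {γ | (∀ α ∈ S, IsInit src rng mul α γ) ∧ IsLUBFam P (d '' S) (d γ)}

/-- `∨F`: the union of `MCE(S)` over the nonempty subsets `S ⊆ F`. -/
def vee (P : Submonoid G) (d : Λ → G) (src rng : Λ → Λ) (mul : Λ → Λ → Λ)
    (F : Finset Λ) : Set Λ :=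
  {γ | ∃ S : Finset Λ, S.Nonempty ∧ S ⊆ F ∧ γ ∈ MCEset P d src rng mul ↑S}

/-- Given that `a` is an initial segment of `c`, the (unique) complementary segment;
junk value `c` otherwise. -/
def tail (src rng : Λ → Λ) (mul : Λ → Λ → Λ) (a c : Λ) : Λ :=
  if h : IsInit src rng mul a c then h.choose else c

section CstarFamilies

variable (P : Submonoid G) (d : Λ → G) (src rng : Λ → Λ) (mul : Λ → Λ → Λ)
variable {B : Type*} [CStarAlgebra B] [PartialOrder B] [StarOrderedRing B]

/-- A Toeplitz `E`-family in a C*-algebra `B` (conditions (1)–(4)). -/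
structure IsToeplitzFamily (t : Λ → B) : Prop where
  vertex_sa : ∀ v, d v = 1 → IsSelfAdjoint (t v)
  vertex_idem : ∀ v, d v = 1 → t v * t v = t v
  vertex_orth : ∀ v w, d v = 1 → d w = 1 → v ≠ w → t v * t w = 0
  mul_eq : ∀ a b, rng a = src b → t a * t b = t (mul a b)
  star_mul_self : ∀ a, star (t a) * t a = t (rng a)
  dom : ∀ p : G, p ∈ P → p ≠ 1 → ∀ v, d v = 1 → ∀ F : Finset Λ,
    (∀ a ∈ F, d a = p ∧ src a = v) → (∑ a ∈ F, t a * star (t a)) ≤ t v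

/-- The Nica-covariance/Cuntz–Krieger relation (5):
`tμ* tν = ∑_{γ = μα = νβ ∈ MCE(μ,ν)} tα tβ*`. -/
def TCKrel (t : Λ → B) : Prop :=
  ∀ μ ν : Λ, ∀ M : Finset Λ, ↑M = MCE P d src rng mul μ ν →
    star (t μ) * t ν =
      ∑ γ ∈ M, t (tail src rng mul μ γ) * star (t (tail src rng mul ν γ))

/-- A Toeplitz–Cuntz–Krieger `E`-family: conditions (1)–(5). -/
def IsTCKFamily (t : Λ → B) : Prop :=
  IsToeplitzFamily P d src rng mul t ∧ TCKrel P d src rng mul t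

/-- Condition (†): for every finite `R ⊆ P∖{1}`, every vertex `v`, and all finite sets
`F_p ⊆ s_p⁻¹(v)` (`p ∈ R`), the product `∏_{p ∈ R} (t_v − ∑_{a ∈ F_p} t_a t_a*)` is nonzero.
(The factors commute, so the product is stated for an arbitrary enumeration of `R`.) -/
def Dagger (t : Λ → B) : Prop :=
  ∀ R : List G, R.Nodup → (∀ p ∈ R, p ∈ P ∧ p ≠ 1) →
    ∀ v, d v = 1 → ∀ Fp : G → Finset Λ,
      (∀ p ∈ R, ∀ a ∈ Fp p, d a = p ∧ src a = v) →
        (R.map fun p => t v - ∑ a ∈ Fp p, t a * star (t a)).prod ≠ 0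

/-- The projection `Q^{∨F}_l = t_l t_l* ∏_{l α ∈ ∨F, d α ≠ 1} (t_{s(l)} − t_{lα} t_{lα}*)`.
(The factors commute, so the product is computed over an arbitrary enumeration.) -/
def Qproj (t : Λ → B) (F : Finset Λ) (l : Λ) : B :=
  if h : {α : Λ | d α ≠ 1 ∧ rng l = src α ∧ mul l α ∈ vee P d src rng mul F}.Finite then
    t l * star (t l) *
      (h.toFinset.toList.map fun α =>
        t (src l) - t (mul l α) * star (t (mul l α))).prod
  else 0

end CstarFamilies

/-- The positive cone `ℕ^k` inside `ℤ^k` (written multiplicatively). -/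
def posCone (k : ℕ) : Submonoid (Multiplicative (Fin k → ℤ)) where
  carrier := {g | ∀ i, 0 ≤ Multiplicative.toAdd g i}
  mul_mem' := by
    intro a b ha hb i
    simpa using add_nonneg (ha i) (hb i)
  one_mem' := by
    intro i
    simp

/-- The `i`-th standard generator of `ℕ^k ⊆ ℤ^k`. -/
def egen (k : ℕ) (i : Fin k) : Multiplicative (Fin k → ℤ) :=
  Multiplicative.ofAdd (Pi.single i 1)

end PSG
namespace PSG

/-!
Write `μ₁α = νβ` for a minimal common extension of `μ₁` and `ν`. By left invariance of the order,
`d(μ₁μ₂) ∨ d(ν) = d(μ₁)(d(μ₂) ∨ d(α))`, so the minimal common extensions of `μ₁μ₂` and `ν` are the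
`μ₁μ₂γ = νβδ` with `μ₂γ = αδ` a minimal common extension of `μ₂` and `α`, each arising exactly once.
Relation (5) for `(μ₁μ₂, ν)` is thus a consequence of relation (5) for `(μ₁, ν)` and for all the
pairs `(μ₂, α)`.

Over `ℕ^k` the tail `α` of an extension of edges of degrees `e_i` and `e_j` has degree `e_j` or `0`,
hence induction on `μ` extends relation (5) from generators to all `μ` against a `ν` whose degree is
a generator. Taking adjoints, a second induction on `μ` then reaches arbitrary `ν`. The pairs of
generators which the hypothesis leaves out are settled by orthogonality: of the vertex projections
if the sources differ, and of the range projections if the degrees agree.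
-/

section Order

variable {G : Type*} [Group G] {P : Submonoid G} {p q r : G}

theorem qle_mul_left_iff (g : G) : qle P (g * p) (g * q) ↔ qle P p q := by
  simp [qle, mul_assoc]

theorem qle_mul_right (p : G) (hq : q ∈ P) : qle P p (p * q) := by
  simpa [qle] using hq

theorem qle_refl (p : G) : qle P p p := by
  simp [qle]

theorem qle.trans (hpq : qle P p q) (hqr : qle P q r) : qle P p r := by
  simpa [qle, mul_assoc] using mul_mem hpq hqr

theorem qle.mem (hpq : qle P p q) (hp : p ∈ P) : q ∈ P := by
  simpa using mul_mem hp hpq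

theorem IsLUB2.symm (h : IsLUB2 P p q r) : IsLUB2 P q p r :=
  ⟨⟨h.1.1, h.1.2.2, h.1.2.1⟩, fun r' hr' => h.2 r' ⟨hr'.1, hr'.2.2, hr'.2.1⟩⟩

theorem isLUB2_of_qle (hpq : qle P p q) (hq : q ∈ P) : IsLUB2 P p q q :=
  ⟨⟨hq, hpq, qle_refl q⟩, fun _ hr => hr.2.2⟩

theorem IsLUB2.unique (hP : QuasiLatticeOrdered P) {r' : G} (h : IsLUB2 P p q r)
    (h' : IsLUB2 P p q r') : r = r' := by
  have hle : r⁻¹ * r' ∈ P := h.2 r' h'.1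
  have hge : (r⁻¹ * r')⁻¹ ∈ P := by simpa [qle] using h'.2 r h.1
  exact inv_mul_eq_one.mp (hP.1 _ hle hge)

theorem isLUB2_mul_left_iff {p₁ p₂ a : G} (hp₁ : p₁ ∈ P) (hp₂ : p₂ ∈ P)
    (ha : IsLUB2 P p₁ q (p₁ * a)) : IsLUB2 P (p₁ * p₂) q (p₁ * r) ↔ IsLUB2 P p₂ a r := by
  have isUB_iff (s : G) : IsUB P (p₁ * p₂) q (p₁ * s) ↔ IsUB P p₂ a s := by
    constructor
    · rintro ⟨hs, hp₂s, hqs⟩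
      have hp₁s : qle P p₁ (p₁ * s) := (qle_mul_right p₁ hp₂).trans hp₂s
      rw [qle_mul_left_iff] at hp₂s
      exact ⟨hp₂s.mem hp₂, hp₂s, (qle_mul_left_iff p₁).mp (ha.2 _ ⟨hs, hp₁s, hqs⟩)⟩
    · rintro ⟨hs, hp₂s, has⟩
      exact ⟨mul_mem hp₁ hs, (qle_mul_left_iff p₁).mpr hp₂s,
        ha.1.2.2.trans ((qle_mul_left_iff p₁).mpr has)⟩
  exact and_congr (isUB_iff r) ((Group.mulLeft_bijective p₁).surjective.forall.trans
    (forall_congr' fun s => imp_congr (isUB_iff s) (qle_mul_left_iff p₁)))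

end Order

section ProductSystem

variable {G : Type*} [Group G] {Λ : Type*} {P : Submonoid G} {d : Λ → G} {src rng : Λ → Λ}
  {mul : Λ → Λ → Λ}

namespace IsProductSystem

theorem eq_and_eq_of_mul_eq_mul (h : IsProductSystem P d src rng mul) {a b a' b' : Λ}
    (hab : rng a = src b) (hab' : rng a' = src b') (heq : mul a b = mul a' b')
    (hd : d a = d a') : a = a' ∧ b = b' := by
  have hdb : d b = d b' := by
    have := congrArg d heq
    rwa [h.d_mul _ _ hab, h.d_mul _ _ hab', hd, mul_right_inj] at this
  exact Prod.mk.inj ((h.factor _ _ (h.d_mem a) (h.d_mem b) _ (h.d_mul a b hab)).unique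
    (y₁ := (a, b)) (y₂ := (a', b'))
    ⟨rfl, rfl, hab, rfl⟩ ⟨hd.symm, hdb.symm, hab', heq.symm⟩)

theorem mul_left_cancel (h : IsProductSystem P d src rng mul) {a b b' : Λ}
    (hab : rng a = src b) (hab' : rng a = src b') (heq : mul a b = mul a b') : b = b' :=
  (h.eq_and_eq_of_mul_eq_mul hab hab' heq rfl).2

theorem tail_mul (h : IsProductSystem P d src rng mul) {a b : Λ} (hab : rng a = src b) :
    tail src rng mul a (mul a b) = b := by
  have hinit : IsInit src rng mul a (mul a b) := ⟨b, hab, rfl⟩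
  rw [tail, dif_pos hinit]
  exact h.mul_left_cancel hinit.choose_spec.1 hab hinit.choose_spec.2

theorem rng_eq_src_rng (h : IsProductSystem P d src rng mul) (a : Λ) : rng a = src (rng a) :=
  (h.src_vertex _ (h.d_rng a)).symm

theorem rng_src (h : IsProductSystem P d src rng mul) (a : Λ) : rng (src a) = src a :=
  h.rng_vertex _ (h.d_src a)

theorem exists_mul_eq_of_qle (h : IsProductSystem P d src rng mul) {p : G} {c : Λ} (hp : p ∈ P)
    (hpc : qle P p (d c)) : ∃ a b, d a = p ∧ rng a = src b ∧ mul a b = c := by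
  obtain ⟨⟨a, b⟩, ⟨ha, -, hab, hc⟩, -⟩ := h.factor p (p⁻¹ * d c) hp hpc c (by simp)
  exact ⟨a, b, ha, hab, hc⟩

theorem exists_refinement_of_mul_eq_mul (h : IsProductSystem P d src rng mul) {a b a' b' : Λ}
    (hab : rng a = src b) (hab' : rng a' = src b') (heq : mul a b = mul a' b')
    (hle : qle P (d a) (d a')) :
    ∃ c, rng a = src c ∧ mul a c = a' ∧ rng c = src b' ∧ mul c b' = b := by
  obtain ⟨x, c, hx, hxc, rfl⟩ := h.exists_mul_eq_of_qle (h.d_mem a) hle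
  have hcb' : rng c = src b' := by rw [← h.rng_mul x c hxc, hab']
  have hxcb' : rng x = src (mul c b') := by rw [h.src_mul _ _ hcb', hxc]
  rw [h.mul_assoc' _ _ _ hxc hcb'] at heq
  obtain ⟨rfl, rfl⟩ := h.eq_and_eq_of_mul_eq_mul hab hxcb' heq hx.symm
  exact ⟨c, hxc, rfl, hcb', rfl⟩

theorem induction_on_generators (h : IsProductSystem P d src rng mul) {S : Set G}
    (hS : Submonoid.closure S = P) {C : Λ → Prop} (vertex : ∀ v, d v = 1 → C v)
    (mul_left : ∀ a b, d a ∈ S → rng a = src b → C b → C (mul a b)) (c : Λ) : C c := by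
  suffices H : ∀ g ∈ Submonoid.closure S, ∀ c, d c = g → C c from
    H (d c) (hS ▸ h.d_mem c) c rfl
  intro g hg
  induction hg using Submonoid.closure_induction_left with
  | one => exact vertex
  | mul_left p hp q hq ih =>
    intro c hc
    obtain ⟨⟨a, b⟩, ⟨ha, hb, hab, rfl⟩, -⟩ :=
      h.factor p q (hS ▸ Submonoid.subset_closure hp) (hS ▸ hq) c hc
    exact mul_left a b (ha ▸ hp) hab (ih b hb)

end IsProductSystem

variable (P d src rng mul) in
/-- The pairs `(α, β)` of tails of the minimal common extensions `μα = νβ` of `μ` and `ν`, usually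
written `Λ^min(μ, ν)`. Summing over it instead of `MCE` avoids the junk values of `tail`. -/
def minExt (μ ν : Λ) : Set (Λ × Λ) :=
  {p | rng μ = src p.1 ∧ rng ν = src p.2 ∧ mul μ p.1 = mul ν p.2 ∧
    IsLUB2 P (d μ) (d ν) (d (mul μ p.1))}

theorem bijOn_swap_minExt (μ ν : Λ) :
    Set.BijOn Prod.swap (minExt P d src rng mul μ ν) (minExt P d src rng mul ν μ) := by
  have mapsTo (μ ν : Λ) :
      Set.MapsTo Prod.swap (minExt P d src rng mul μ ν) (minExt P d src rng mul ν μ) :=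
    fun _ ⟨hμα, hνβ, heq, hlub⟩ => ⟨hνβ, hμα, heq.symm, heq ▸ hlub.symm⟩
  exact Set.InvOn.bijOn ⟨fun _ _ => Prod.swap_swap _, fun _ _ => Prod.swap_swap _⟩
    (mapsTo μ ν) (mapsTo ν μ)

namespace IsProductSystem

theorem bijOn_tail_MCE (h : IsProductSystem P d src rng mul) (μ ν : Λ) :
    Set.BijOn (fun γ => (tail src rng mul μ γ, tail src rng mul ν γ))
      (MCE P d src rng mul μ ν) (minExt P d src rng mul μ ν) := by
  refine Set.InvOn.bijOn (f' := fun p => mul μ p.1) ⟨?_, ?_⟩ ?_ ?_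
  · rintro _ ⟨⟨α, hμα, rfl⟩, -⟩
    simp only [h.tail_mul hμα]
  · rintro ⟨α, β⟩ ⟨hμα, hνβ, heq, -⟩
    exact Prod.ext (h.tail_mul hμα) (by simp only [heq, h.tail_mul hνβ])
  · rintro γ ⟨⟨α, hμα, hα⟩, ⟨β, hνβ, hβ⟩, hlub⟩
    have htailμ : tail src rng mul μ γ = α := hα ▸ h.tail_mul hμα
    have htailν : tail src rng mul ν γ = β := hβ ▸ h.tail_mul hνβ
    simp only [htailμ, htailν]
    exact ⟨hμα, hνβ, hα.trans hβ.symm, hα ▸ hlub⟩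
  · rintro ⟨α, β⟩ ⟨hμα, hνβ, heq, hlub⟩
    exact ⟨⟨α, hμα, rfl⟩, ⟨β, hνβ, heq.symm⟩, hlub⟩

theorem minExt_eq_empty_of_src_ne (h : IsProductSystem P d src rng mul) {μ ν : Λ}
    (hne : src μ ≠ src ν) : minExt P d src rng mul μ ν = ∅ := by
  refine Set.eq_empty_of_forall_notMem fun p ⟨hμα, hνβ, heq, _⟩ => hne ?_
  rw [← h.src_mul _ _ hμα, heq, h.src_mul _ _ hνβ]

theorem minExt_eq_empty_of_d_eq (h : IsProductSystem P d src rng mul) {μ ν : Λ}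
    (hd : d μ = d ν) (hne : μ ≠ ν) : minExt P d src rng mul μ ν = ∅ :=
  Set.eq_empty_of_forall_notMem fun _ ⟨hμα, hνβ, heq, _⟩ =>
    hne (h.eq_and_eq_of_mul_eq_mul hμα hνβ heq hd).1

theorem d_snd_eq_of_mem_minExt (hP : QuasiLatticeOrdered P) (h : IsProductSystem P d src rng mul)
    {μ ν : Λ} {p p' : Λ × Λ} (hp : p ∈ minExt P d src rng mul μ ν)
    (hp' : p' ∈ minExt P d src rng mul μ ν) : d p.2 = d p'.2 := by
  have hd := hp.2.2.2.unique hP hp'.2.2.2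
  rwa [hp.2.2.1, hp'.2.2.1, h.d_mul _ _ hp.2.1, h.d_mul _ _ hp'.2.1, mul_right_inj] at hd

theorem eq_of_mem_minExt_of_snd_eq (h : IsProductSystem P d src rng mul) {μ ν : Λ}
    {p p' : Λ × Λ} (hp : p ∈ minExt P d src rng mul μ ν)
    (hp' : p' ∈ minExt P d src rng mul μ ν) (heq : p.2 = p'.2) : p = p' :=
  Prod.ext (h.mul_left_cancel hp.1 hp'.1 (by rw [hp.2.2.1, heq, hp'.2.2.1])) heq

theorem minExt_mul_right (hP : QuasiLatticeOrdered P) (h : IsProductSystem P d src rng mul)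
    {a b : Λ} (hab : rng a = src b) :
    minExt P d src rng mul a (mul a b) = {(b, rng b)} := by
  have hrng : rng (mul a b) = rng b := h.rng_mul _ _ hab
  have hmem : (b, rng b) ∈ minExt P d src rng mul a (mul a b) := by
    refine ⟨hab, hrng.trans (h.rng_eq_src_rng b), ?_, ?_⟩
    · rw [← hrng, h.mul_rng_self]
    · exact isLUB2_of_qle (h.d_mul _ _ hab ▸ qle_mul_right _ (h.d_mem b)) (h.d_mem _)
  refine Set.eq_singleton_iff_unique_mem.mpr
    ⟨hmem, fun p hp => h.eq_of_mem_minExt_of_snd_eq hp hmem ?_⟩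
  have hp₂ : d p.2 = 1 := (h.d_snd_eq_of_mem_minExt hP hp hmem).trans (h.d_rng b)
  rw [← h.src_vertex _ hp₂, ← hp.2.1, hrng]

theorem rng_eq_src_of_mem_minExt (h : IsProductSystem P d src rng mul) {μ₁ μ₂ ν : Λ}
    {p q : Λ × Λ} (hp : p ∈ minExt P d src rng mul μ₁ ν)
    (hq : q ∈ minExt P d src rng mul μ₂ p.1) : rng p.2 = src q.2 := by
  rw [← hq.2.1, ← h.rng_mul _ _ hp.1, hp.2.2.1, h.rng_mul _ _ hp.2.1]

variable {μ₁ μ₂ ν : Λ}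

theorem mem_minExt_mul (h : IsProductSystem P d src rng mul) (hμ : rng μ₁ = src μ₂)
    {α β γ δ : Λ} (hp : (α, β) ∈ minExt P d src rng mul μ₁ ν)
    (hq : (γ, δ) ∈ minExt P d src rng mul μ₂ α) :
    (γ, mul β δ) ∈ minExt P d src rng mul (mul μ₁ μ₂) ν := by
  have hβδ : rng β = src δ := h.rng_eq_src_of_mem_minExt hp hq
  obtain ⟨hμα, hνβ, heq, hlub⟩ := hp
  obtain ⟨hμγ, hαδ, heq', hlub'⟩ := hq
  dsimp only at hμα hνβ heq hlub hμγ hαδ heq' hlub'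
  have hassoc : mul (mul μ₁ μ₂) γ = mul μ₁ (mul μ₂ γ) := h.mul_assoc' _ _ _ hμ hμγ
  refine ⟨(h.rng_mul _ _ hμ).trans hμγ, hνβ.trans (h.src_mul _ _ hβδ).symm, ?_, ?_⟩
  · calc mul (mul μ₁ μ₂) γ = mul μ₁ (mul α δ) := by rw [hassoc, heq']
      _ = mul (mul ν β) δ := by rw [← h.mul_assoc' _ _ _ hμα hαδ, heq]
      _ = mul ν (mul β δ) := h.mul_assoc' _ _ _ hνβ hβδ
  · rw [h.d_mul _ _ hμα] at hlub
    dsimp only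
    rw [hassoc, h.d_mul _ _ hμ, h.d_mul _ _ (hμ.trans (h.src_mul _ _ hμγ).symm)]
    exact (isLUB2_mul_left_iff (h.d_mem _) (h.d_mem _) hlub).mpr hlub'

theorem exists_of_mem_minExt_mul (hP : QuasiLatticeOrdered P)
    (h : IsProductSystem P d src rng mul) (hμ : rng μ₁ = src μ₂) {γ ε : Λ}
    (hγε : (γ, ε) ∈ minExt P d src rng mul (mul μ₁ μ₂) ν) :
    ∃ α β δ, (α, β) ∈ minExt P d src rng mul μ₁ ν ∧ (γ, δ) ∈ minExt P d src rng mul μ₂ α ∧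
      mul β δ = ε := by
  obtain ⟨hμγ, hνε, heq, hlub⟩ := hγε
  dsimp only at hμγ hνε heq hlub
  rw [h.rng_mul _ _ hμ] at hμγ
  have hμμγ : rng μ₁ = src (mul μ₂ γ) := hμ.trans (h.src_mul _ _ hμγ).symm
  rw [h.mul_assoc' _ _ _ hμ hμγ] at heq hlub
  obtain ⟨s, hs⟩ : ∃ s, IsLUB2 P (d μ₁) (d ν) s := by
    refine hP.2 _ (h.d_mem _) _ (h.d_mem _) ⟨_, h.d_mem (mul μ₁ (mul μ₂ γ)), ?_, hlub.1.2.2⟩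
    exact h.d_mul _ _ hμμγ ▸ qle_mul_right _ (h.d_mem _)
  have hsle : qle P s (d (mul μ₁ (mul μ₂ γ))) :=
    hs.2 _ ⟨h.d_mem _, h.d_mul _ _ hμμγ ▸ qle_mul_right _ (h.d_mem _), hlub.1.2.2⟩
  obtain ⟨η, δ, rfl, hηδ, heq'⟩ := h.exists_mul_eq_of_qle hs.1.1 hsle
  obtain ⟨α, hμα, rfl, hαδ, hαδ'⟩ :=
    h.exists_refinement_of_mul_eq_mul hμμγ hηδ heq'.symm hs.1.2.1
  obtain ⟨β, hνβ, heqβ, -, hβδ⟩ :=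
    h.exists_refinement_of_mul_eq_mul hνε hηδ (heq'.trans heq).symm hs.1.2.2
  refine ⟨α, β, δ, ⟨hμα, hνβ, heqβ.symm, hs⟩, ⟨hμγ, hαδ, hαδ'.symm, ?_⟩, hβδ⟩
  rw [h.d_mul _ _ hμα] at hs
  rw [h.d_mul _ _ hμ, h.d_mul _ _ hμμγ] at hlub
  exact (isLUB2_mul_left_iff (h.d_mem _) (h.d_mem _) hs).mp hlub

theorem minExt_mul_left (hP : QuasiLatticeOrdered P) (h : IsProductSystem P d src rng mul)
    (hμ : rng μ₁ = src μ₂) :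
    minExt P d src rng mul (mul μ₁ μ₂) ν =
      ⋃ p ∈ minExt P d src rng mul μ₁ ν,
        (fun q => (q.1, mul p.2 q.2)) '' minExt P d src rng mul μ₂ p.1 := by
  ext ⟨γ, ε⟩
  simp only [Set.mem_iUnion₂, Set.mem_image]
  constructor
  · intro hγε
    obtain ⟨α, β, δ, hp, hq, rfl⟩ := h.exists_of_mem_minExt_mul hP hμ hγε
    exact ⟨(α, β), hp, (γ, δ), hq, rfl⟩
  · rintro ⟨p, hp, q, hq, heq⟩
    exact heq ▸ h.mem_minExt_mul hμ hp hq

theorem injOn_minExt_mul (h : IsProductSystem P d src rng mul) {p : Λ × Λ}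
    (hp : p ∈ minExt P d src rng mul μ₁ ν) :
    Set.InjOn (fun q => (q.1, mul p.2 q.2)) (minExt P d src rng mul μ₂ p.1) := by
  intro q hq q' hq' heq
  obtain ⟨hfst, hsnd⟩ := Prod.mk.inj heq
  exact Prod.ext hfst (h.mul_left_cancel (h.rng_eq_src_of_mem_minExt hp hq)
    (h.rng_eq_src_of_mem_minExt hp hq') hsnd)

theorem pairwiseDisjoint_minExt_mul (hP : QuasiLatticeOrdered P)
    (h : IsProductSystem P d src rng mul) :
    (minExt P d src rng mul μ₁ ν).PairwiseDisjoint
      fun p => (fun q => (q.1, mul p.2 q.2)) '' minExt P d src rng mul μ₂ p.1 := by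
  intro p hp p' hp' hne
  refine Set.disjoint_left.mpr ?_
  rintro _ ⟨q, hq, rfl⟩ ⟨q', hq', heq⟩
  refine hne (h.eq_of_mem_minExt_of_snd_eq hp hp' ?_)
  exact (h.eq_and_eq_of_mul_eq_mul (h.rng_eq_src_of_mem_minExt hp hq)
    (h.rng_eq_src_of_mem_minExt hp' hq') (Prod.mk.inj heq).2.symm
    (h.d_snd_eq_of_mem_minExt hP hp hp')).1

end IsProductSystem

end ProductSystem

section NicaRelation

variable {G : Type*} [Group G] {Λ : Type*} {P : Submonoid G} {d : Λ → G} {src rng : Λ → Λ}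
  {mul : Λ → Λ → Λ}

section StarRing

variable {B : Type*} [NonUnitalSemiring B] [StarRing B] {t : Λ → B} {μ ν : Λ}

variable (P d src rng mul t) in
/-- Relation (5) for the single pair `μ, ν`, indexed by pairs of tails. Finiteness of the index set
is part of the relation, as `∑ᶠ` has the junk value `0` on infinite supports. -/
def NicaRel (μ ν : Λ) : Prop :=
  (minExt P d src rng mul μ ν).Finite ∧
    star (t μ) * t ν = ∑ᶠ p ∈ minExt P d src rng mul μ ν, t p.1 * star (t p.2)

theorem NicaRel.symm (hrel : NicaRel P d src rng mul t μ ν) :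
    NicaRel P d src rng mul t ν μ := by
  refine ⟨(bijOn_swap_minExt μ ν).finite_iff_finite.mp hrel.1, ?_⟩
  calc star (t ν) * t μ = star (star (t μ) * t ν) := by rw [star_mul, star_star]
    _ = ∑ᶠ p ∈ minExt P d src rng mul μ ν, star (t p.1 * star (t p.2)) := by
      rw [hrel.2]
      exact (starAddEquiv : B ≃+ B).toAddMonoidHom.map_finsum_mem _ hrel.1
    _ = ∑ᶠ p ∈ minExt P d src rng mul ν μ, t p.1 * star (t p.2) :=
      finsum_mem_eq_of_bijOn Prod.swap (bijOn_swap_minExt μ ν) fun p _ => by simp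

theorem nicaRel_of_minExt_eq_empty (hempty : minExt P d src rng mul μ ν = ∅)
    (hzero : star (t μ) * t ν = 0) : NicaRel P d src rng mul t μ ν := by
  simp [NicaRel, hempty, hzero]

theorem IsProductSystem.nicaRel_iff_eq_sum (h : IsProductSystem P d src rng mul) {M : Finset Λ}
    (hM : ↑M = MCE P d src rng mul μ ν) :
    NicaRel P d src rng mul t μ ν ↔
      star (t μ) * t ν =
        ∑ γ ∈ M, t (tail src rng mul μ γ) * star (t (tail src rng mul ν γ)) := by
  have hbij := h.bijOn_tail_MCE μ ν
  have hfin : (minExt P d src rng mul μ ν).Finite :=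
    hbij.finite_iff_finite.mp (hM ▸ M.finite_toSet)
  rw [NicaRel, and_iff_right hfin, ← finsum_mem_coe_finset, hM,
    finsum_mem_eq_of_bijOn (g := fun p => t p.1 * star (t p.2)) _ hbij fun _ _ => rfl]

end StarRing

theorem star_mul_eq_zero_of_mul_star_add_mul_star_le {A : Type*} [NonUnitalNormedRing A]
    [StarRing A] [CStarRing A] [PartialOrder A] [StarOrderedRing A] {a b q : A}
    (hle : a * star a + b * star b ≤ q) (hq : q * b = b) (hb : b * (star b * b) = b) :
    star a * b = 0 := by
  have hconj : star b * (a * star a + b * star b) * b =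
      star (star a * b) * (star a * b) + star b * b := by
    calc _ = star b * a * (star a * b) + star b * (b * (star b * b)) := by noncomm_ring
      _ = _ := by rw [hb, star_mul, star_star]
  have hnonpos : star (star a * b) * (star a * b) ≤ 0 := by
    have := star_left_conjugate_le_conjugate hle b
    rwa [hconj, mul_assoc (star b) q b, hq, add_le_iff_nonpos_left] at this
  exact CStarRing.star_mul_self_eq_zero_iff _ |>.mp
    (hnonpos.antisymm (star_mul_self_nonneg _))

variable {B : Type*} [CStarAlgebra B] [PartialOrder B] {t : Λ → B} {μ ν : Λ}

namespace IsToeplitzFamily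

theorem src_mul (h : IsProductSystem P d src rng mul) (hT : IsToeplitzFamily P d src rng mul t)
    (a : Λ) : t (src a) * t a = t a := by
  rw [hT.mul_eq _ _ (h.rng_src a), h.src_mul_self]

theorem mul_rng (h : IsProductSystem P d src rng mul) (hT : IsToeplitzFamily P d src rng mul t)
    (a : Λ) : t a * t (rng a) = t a := by
  rw [hT.mul_eq _ _ (h.rng_eq_src_rng a), h.mul_rng_self]

theorem star_rng (h : IsProductSystem P d src rng mul) (hT : IsToeplitzFamily P d src rng mul t)
    (a : Λ) : star (t (rng a)) = t (rng a) :=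
  hT.vertex_sa _ (h.d_rng a)

theorem star_mul_eq_zero_of_src_ne (h : IsProductSystem P d src rng mul)
    (hT : IsToeplitzFamily P d src rng mul t) (hne : src μ ≠ src ν) :
    star (t μ) * t ν = 0 := by
  calc star (t μ) * t ν = star (t (src μ) * t μ) * (t (src ν) * t ν) := by
        rw [hT.src_mul h, hT.src_mul h]
    _ = star (t μ) * (t (src μ) * t (src ν)) * t ν := by
        rw [star_mul, (hT.vertex_sa _ (h.d_src μ)).star_eq]
        noncomm_ring
    _ = 0 := by rw [hT.vertex_orth _ _ (h.d_src _) (h.d_src _) hne, mul_zero, zero_mul]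

theorem star_mul_eq_zero_of_d_eq [StarOrderedRing B] (h : IsProductSystem P d src rng mul)
    (hT : IsToeplitzFamily P d src rng mul t) (hd : d μ = d ν) (hne : μ ≠ ν) :
    star (t μ) * t ν = 0 := by
  rcases ne_or_eq (src μ) (src ν) with hsrc | hsrc
  · exact hT.star_mul_eq_zero_of_src_ne h hsrc
  by_cases hμ : d μ = 1
  · rw [(hT.vertex_sa _ hμ).star_eq, hT.vertex_orth _ _ hμ (hd ▸ hμ) hne]
  have hle : t μ * star (t μ) + t ν * star (t ν) ≤ t (src ν) := by
    rw [← Finset.sum_pair hne (f := fun a => t a * star (t a))]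
    exact hT.dom (d μ) (h.d_mem μ) hμ (src ν) (h.d_src ν) {μ, ν} (by simp [hsrc, hd])
  exact star_mul_eq_zero_of_mul_star_add_mul_star_le hle (hT.src_mul h ν)
    (by rw [hT.star_mul_self, hT.mul_rng h])

theorem nicaRel_of_src_ne (h : IsProductSystem P d src rng mul)
    (hT : IsToeplitzFamily P d src rng mul t) (hne : src μ ≠ src ν) :
    NicaRel P d src rng mul t μ ν :=
  nicaRel_of_minExt_eq_empty (h.minExt_eq_empty_of_src_ne hne)
    (hT.star_mul_eq_zero_of_src_ne h hne)

theorem nicaRel_mul_right (hP : QuasiLatticeOrdered P) (h : IsProductSystem P d src rng mul)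
    (hT : IsToeplitzFamily P d src rng mul t) {a b : Λ} (hab : rng a = src b) :
    NicaRel P d src rng mul t a (mul a b) := by
  rw [NicaRel, h.minExt_mul_right hP hab, finsum_mem_singleton, hT.star_rng h, hT.mul_rng h,
    ← hT.mul_eq _ _ hab, ← mul_assoc, hT.star_mul_self, hab, hT.src_mul h]
  exact ⟨Set.finite_singleton _, rfl⟩

theorem nicaRel_vertex (hP : QuasiLatticeOrdered P) (h : IsProductSystem P d src rng mul)
    (hT : IsToeplitzFamily P d src rng mul t) (hμ : d μ = 1) (ν : Λ) :
    NicaRel P d src rng mul t μ ν := by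
  rcases ne_or_eq (src μ) (src ν) with hsrc | hsrc
  · exact hT.nicaRel_of_src_ne h hsrc
  · obtain rfl : μ = src ν := by rw [← hsrc, h.src_vertex μ hμ]
    simpa only [h.src_mul_self] using hT.nicaRel_mul_right hP h (h.rng_src ν)

theorem nicaRel_of_d_eq [StarOrderedRing B] (hP : QuasiLatticeOrdered P)
    (h : IsProductSystem P d src rng mul) (hT : IsToeplitzFamily P d src rng mul t)
    (hd : d μ = d ν) : NicaRel P d src rng mul t μ ν := by
  rcases ne_or_eq μ ν with hne | rfl
  · exact nicaRel_of_minExt_eq_empty (h.minExt_eq_empty_of_d_eq hd hne)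
      (hT.star_mul_eq_zero_of_d_eq h hd hne)
  · simpa only [h.mul_rng_self] using hT.nicaRel_mul_right hP h (h.rng_eq_src_rng μ)

theorem nicaRel_mul_left (hP : QuasiLatticeOrdered P) (h : IsProductSystem P d src rng mul)
    (hT : IsToeplitzFamily P d src rng mul t) {μ₁ μ₂ : Λ} (hμ : rng μ₁ = src μ₂)
    (hrel₁ : NicaRel P d src rng mul t μ₁ ν)
    (hrel₂ : ∀ p ∈ minExt P d src rng mul μ₁ ν, NicaRel P d src rng mul t μ₂ p.1) :
    NicaRel P d src rng mul t (mul μ₁ μ₂) ν := by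
  have hfin (p) (hp : p ∈ minExt P d src rng mul μ₁ ν) :
      ((fun q : Λ × Λ => (q.1, mul p.2 q.2)) '' minExt P d src rng mul μ₂ p.1).Finite :=
    (hrel₂ p hp).1.image _
  have hinner (p) (hp : p ∈ minExt P d src rng mul μ₁ ν) :
      star (t μ₂) * (t p.1 * star (t p.2)) =
        ∑ᶠ q ∈ (fun q : Λ × Λ => (q.1, mul p.2 q.2)) '' minExt P d src rng mul μ₂ p.1,
          t q.1 * star (t q.2) := by
    rw [finsum_mem_image (h.injOn_minExt_mul hp), ← mul_assoc, (hrel₂ p hp).2,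
      finsum_mem_mul' _ _ (hrel₂ p hp).1]
    refine finsum_mem_congr rfl fun q hq => ?_
    rw [← hT.mul_eq _ _ (h.rng_eq_src_of_mem_minExt hp hq), star_mul, mul_assoc]
  rw [NicaRel, h.minExt_mul_left hP hμ]
  refine ⟨hrel₁.1.biUnion hfin, ?_⟩
  calc star (t (mul μ₁ μ₂)) * t ν = star (t μ₂) * (star (t μ₁) * t ν) := by
        rw [← hT.mul_eq _ _ hμ, star_mul, mul_assoc]
    _ = ∑ᶠ p ∈ minExt P d src rng mul μ₁ ν, star (t μ₂) * (t p.1 * star (t p.2)) := by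
        rw [hrel₁.2, mul_finsum_mem' _ _ hrel₁.1]
    _ = _ := by
        rw [finsum_mem_biUnion (h.pairwiseDisjoint_minExt_mul hP) hrel₁.1 hfin]
        exact finsum_mem_congr rfl hinner

theorem nicaRel_of_residual_closed (hP : QuasiLatticeOrdered P)
    (h : IsProductSystem P d src rng mul) (hT : IsToeplitzFamily P d src rng mul t)
    {S D : Set G} (hS : Submonoid.closure S = P)
    (hD : ∀ p ∈ S, ∀ q ∈ D, ∀ r, IsLUB2 P p q r → p⁻¹ * r ∈ D)
    (hrel : ∀ μ ν, d μ ∈ S → d ν ∈ D → NicaRel P d src rng mul t μ ν)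
    (μ ν : Λ) (hν : d ν ∈ D) : NicaRel P d src rng mul t μ ν := by
  induction μ using h.induction_on_generators hS generalizing ν with
  | vertex v hv => exact hT.nicaRel_vertex hP h hv ν
  | mul_left a b ha hab ih =>
    refine hT.nicaRel_mul_left hP h hab (hrel a ν ha hν) fun p ⟨haα, _, _, hlub⟩ => ih p.1 ?_
    simpa [h.d_mul _ _ haα] using hD _ ha _ hν _ hlub

theorem nicaRel_of_generators [StarOrderedRing B] (hP : QuasiLatticeOrdered P)
    (h : IsProductSystem P d src rng mul) (hT : IsToeplitzFamily P d src rng mul t)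
    {ι : Type*} {e : ι → G} (he : Submonoid.closure (Set.range e) = P)
    (hres : ∀ i j r, IsLUB2 P (e i) (e j) r → (e i)⁻¹ * r ∈ insert 1 (Set.range e))
    (hrel : ∀ i j, i ≠ j → ∀ μ ν, d μ = e i → d ν = e j → src μ = src ν →
      NicaRel P d src rng mul t μ ν) (μ ν : Λ) : NicaRel P d src rng mul t μ ν := by
  have hgen (μ ν : Λ) (hμ : d μ ∈ Set.range e) (hν : d ν ∈ insert 1 (Set.range e)) :
      NicaRel P d src rng mul t μ ν := by
    obtain ⟨i, hi⟩ := hμ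
    obtain hν | ⟨j, hj⟩ := hν
    · exact (hT.nicaRel_vertex hP h hν μ).symm
    obtain rfl | hij := eq_or_ne i j
    · exact hT.nicaRel_of_d_eq hP h (hi.symm.trans hj)
    obtain hsrc | hsrc := ne_or_eq (src μ) (src ν)
    · exact hT.nicaRel_of_src_ne h hsrc
    · exact hrel i j hij μ ν hi.symm hj.symm hsrc
  have hres' : ∀ p ∈ Set.range e, ∀ q ∈ insert 1 (Set.range e), ∀ r, IsLUB2 P p q r →
      p⁻¹ * r ∈ insert 1 (Set.range e) := by
    rintro _ ⟨i, rfl⟩ _ (rfl | ⟨j, rfl⟩) r hr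
    · have hi : e i ∈ P := he ▸ Submonoid.subset_closure (Set.mem_range_self i)
      have hr' : IsLUB2 P (e i) 1 (e i) :=
        (isLUB2_of_qle (by simpa using qle_mul_right 1 hi) hi).symm
      simp [hr.unique hP hr']
    · exact hres i j r hr
  have hgen_right (μ ν : Λ) (hν : d ν ∈ Set.range e) : NicaRel P d src rng mul t μ ν :=
    hT.nicaRel_of_residual_closed hP h he hres' hgen μ ν (Or.inr hν)
  exact hT.nicaRel_of_residual_closed hP h he (D := Set.univ) (fun _ _ _ _ _ _ => Set.mem_univ _)
    (fun μ ν hμ _ => (hgen_right ν μ hμ).symm) μ ν (Set.mem_univ _)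

end IsToeplitzFamily

/-- Besides `ℕ^k`, this applies to all right-angled Artin monoids: there the residual
`(e i)⁻¹ (e i ∨ e j)` is `1` or `e j` whenever the least upper bound exists. -/
theorem stmt13_general (hP : QuasiLatticeOrdered P) {ι : Type*} (e : ι → G)
    (he : Submonoid.closure (Set.range e) = P)
    (hres : ∀ i j r, IsLUB2 P (e i) (e j) r → (e i)⁻¹ * r ∈ insert 1 (Set.range e))
    (hPS : IsProductSystem P d src rng mul)
    (hfin : ∀ i j, i ≠ j → ∀ μ ν, d μ = e i → d ν = e j → src μ = src ν →
      (MCE P d src rng mul μ ν).Finite)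
    [StarOrderedRing B] (hT : IsToeplitzFamily P d src rng mul t) :
    TCKrel P d src rng mul t ↔
      ∀ i j, i ≠ j → ∀ μ ν, d μ = e i → d ν = e j → src μ = src ν →
        ∀ M : Finset Λ, ↑M = MCE P d src rng mul μ ν →
          star (t μ) * t ν =
            ∑ γ ∈ M, t (tail src rng mul μ γ) * star (t (tail src rng mul ν γ)) := by
  refine ⟨fun hrel _ _ _ μ ν _ _ _ => hrel μ ν, fun hrel μ ν M hM => ?_⟩
  refine (hPS.nicaRel_iff_eq_sum hM).mp (hT.nicaRel_of_generators hP hPS he hres ?_ μ ν)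
  intro i j hij μ ν hμ hν hsrc
  have hM := (hfin i j hij μ ν hμ hν hsrc).coe_toFinset
  exact (hPS.nicaRel_iff_eq_sum hM).mpr (hrel i j hij μ ν hμ hν hsrc _ hM)

end NicaRelation

section PosCone

variable {k : ℕ} {p q r : Multiplicative (Fin k → ℤ)}

theorem mem_posCone_iff : p ∈ posCone k ↔ 0 ≤ p.toAdd :=
  Iff.rfl

theorem qle_posCone_iff : qle (posCone k) p q ↔ p.toAdd ≤ q.toAdd := by
  rw [qle, mem_posCone_iff, toAdd_mul, toAdd_inv, neg_add_eq_sub, sub_nonneg]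

theorem isLUB2_posCone_sup (hp : p ∈ posCone k) :
    IsLUB2 (posCone k) p q (Multiplicative.ofAdd (p.toAdd ⊔ q.toAdd)) := by
  simp only [IsLUB2, IsUB, qle_posCone_iff, mem_posCone_iff, toAdd_ofAdd]
  exact ⟨⟨le_sup_of_le_left hp, le_sup_left, le_sup_right⟩, fun _ hr => sup_le hr.2.1 hr.2.2⟩

theorem quasiLatticeOrdered_posCone (k : ℕ) : QuasiLatticeOrdered (posCone k) := by
  refine ⟨fun g hg hg' => ?_, fun p hp q _ _ => ⟨_, isLUB2_posCone_sup hp⟩⟩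
  rw [mem_posCone_iff] at hg hg'
  exact toAdd_eq_zero.mp ((neg_nonneg.mp hg').antisymm hg)

theorem egen_mem_posCone (i : Fin k) : egen k i ∈ posCone k :=
  mem_posCone_iff.mpr (Pi.single_nonneg.mpr zero_le_one)

theorem closure_range_egen (k : ℕ) : Submonoid.closure (Set.range (egen k)) = posCone k := by
  refine le_antisymm (Submonoid.closure_le.mpr (Set.range_subset_iff.mpr egen_mem_posCone)) ?_
  intro g hg
  have hprod : g = ∏ i, egen k i ^ (g.toAdd i).toNat := by
    apply Multiplicative.toAdd.injective
    ext j
    simp [egen, toAdd_prod, Pi.single_apply, hg j]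
  rw [hprod]
  exact prod_mem fun i _ => pow_mem (Submonoid.subset_closure (Set.mem_range_self i)) _

theorem inv_egen_mul_mem_of_isLUB2 (i j : Fin k) (r : Multiplicative (Fin k → ℤ))
    (hr : IsLUB2 (posCone k) (egen k i) (egen k j) r) :
    (egen k i)⁻¹ * r ∈ insert 1 (Set.range (egen k)) := by
  obtain rfl := hr.unique (quasiLatticeOrdered_posCone k) (isLUB2_posCone_sup (egen_mem_posCone i))
  obtain rfl | hij := eq_or_ne i j
  · left
    simp
  · right
    refine ⟨j, Multiplicative.toAdd.injective ?_⟩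
    rw [toAdd_mul, toAdd_inv, toAdd_ofAdd, eq_neg_add_iff_add_eq]
    ext l
    simp only [egen, toAdd_ofAdd, Pi.add_apply, Pi.sup_apply, Pi.single_apply]
    grind

end PosCone

/-- Lemma 8.2: over `ℕ^k`, a Toeplitz `E`-family satisfies relation (5) (and hence is a
Toeplitz–Cuntz–Krieger `E`-family) iff relation (5) holds for all pairs of edges of degrees
`e_i ≠ e_j` with common source. -/
theorem stmt13 {k : ℕ} {Λ : Type*}
    (d : Λ → Multiplicative (Fin k → ℤ)) (src rng : Λ → Λ) (mul : Λ → Λ → Λ)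
    (hPS : IsProductSystem (posCone k) d src rng mul)
    (hFA : FinitelyAligned (posCone k) d src rng mul)
    {B : Type*} [CStarAlgebra B] [PartialOrder B] [StarOrderedRing B]
    (t : Λ → B) (hT : IsToeplitzFamily (posCone k) d src rng mul t) :
    TCKrel (posCone k) d src rng mul t ↔
      (∀ i j : Fin k, i ≠ j → ∀ μ ν : Λ,
        d μ = egen k i → d ν = egen k j → src μ = src ν →
        ∀ M : Finset Λ, ↑M = MCE (posCone k) d src rng mul μ ν →
          star (t μ) * t ν =
            ∑ γ ∈ M, t (tail src rng mul μ γ) * star (t (tail src rng mul ν γ))) :=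
  stmt13_general (quasiLatticeOrdered_posCone k) (egen k) (closure_range_egen k)
    inv_egen_mul_mem_of_isLUB2 hPS (fun _ _ _ μ ν _ _ _ => hFA μ ν) hT

end PSG
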